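/- arXiv:0810.5647 — 3 statements merged into one kernel-verified Lean document; each statement's English description precedes it below -/
import Mathlib

section
/- Let D_A ∈ K[X_1,…,X_{2n−1}] be the determinant of the generic n×n Hankel matrix whose (i,j) entry is the variable X_{i+j−1}. Then for every point (h_1,…,h_{2n−1}) ∈ K^{2n−1} and every 1 ≤ k ≤ 2n−1, the formal partial derivative ∂D_A/∂X_k evaluated at that point equals σ_{k−1}(H_A*), the sum of the entries of the adjugate H_A* of the matrix H_A = (h_{i+j−1}) lying on the (k−1)-st anti-diagonal. -/
open Matrix

/-- The `k`-th anti-diagonal sum of an `n × n` matrix `M` (0-based indexing):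
`σ_k(M) = Σ_{i+j=k} M i j`. -/
def antiDiagSum {K : Type*} [CommRing K] {n : ℕ} (M : Matrix (Fin n) (Fin n) K)
    (k : ℕ) : K :=
  ∑ i : Fin n, ∑ j : Fin n, if (i : ℕ) + (j : ℕ) = k then M i j else 0

theorem derivation_prod_aux {R A ι : Type*} [CommRing R] [CommRing A] [Algebra R A]
    [DecidableEq ι] (D : Derivation R A A) (s : Finset ι) (f : ι → A) :
    D (∏ i ∈ s, f i) = ∑ i ∈ s, (∏ j ∈ s.erase i, f j) * D (f i) := by
  induction s using Finset.induction_on with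
  | empty => simp
  | insert a s ha ih =>
    rw [Finset.prod_insert ha, D.leibniz, ih, Finset.sum_insert ha, Finset.erase_insert ha,
      smul_eq_mul, smul_eq_mul, add_comm, Finset.mul_sum]
    congr 1
    refine Finset.sum_congr rfl fun i hi => ?_
    have hne : a ≠ i := fun e => ha (e ▸ hi)
    rw [Finset.erase_insert_of_ne hne, Finset.prod_insert (by simp [ha]), mul_assoc]

theorem derivation_det_aux {R A : Type*} [CommRing R] [CommRing A] [Algebra R A] {n : ℕ}
    (D : Derivation R A A) (M : Matrix (Fin n) (Fin n) A) :
    D M.det = ∑ i, ∑ j, M.adjugate i j * D (M j i) := by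
  have h1 : ∀ i, ∑ j, M.adjugate i j * D (M j i) =
      (M.updateCol i (fun j => D (M j i))).det := by
    intro i
    rw [← Matrix.cramer_apply, Matrix.cramer_eq_adjugate_mulVec]
    rfl
  simp_rw [h1, Matrix.det_apply]
  rw [Finset.sum_comm, map_sum]
  refine Finset.sum_congr rfl fun σ _ => ?_
  rw [← Finset.smul_sum]
  have h2 : D (∏ i, M (σ i) i) =
      ∑ i, ∏ j, (M.updateCol i (fun j => D (M j i))) (σ j) j := by
    rw [derivation_prod_aux]
    refine Finset.sum_congr rfl fun i _ => ?_
    rw [← Finset.prod_erase_mul _ _ (Finset.mem_univ i)]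
    congr 1
    · refine Finset.prod_congr rfl fun j hj => ?_
      rw [Matrix.updateCol_ne (Finset.ne_of_mem_erase hj)]
    · rw [Matrix.updateCol_self]
  rw [← h2]
  simp only [Units.smul_def, map_zsmul]

/-- Let `D_A` be the determinant of the generic `n × n` Hankel matrix whose
`(i,j)` entry is the variable `X_{i+j-1}` (0-based: `X_{i+j+1}`).  For every point
`(h_1, …, h_{2n-1})` and every `1 ≤ k ≤ 2n-1`, the formal partial derivative
`∂D_A/∂X_k` evaluated at that point equals `σ_{k-1}(H_A*)`, the `(k-1)`-st
anti-diagonal sum of the adjugate of the matrix `H_A = (h_{i+j-1})`. -/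
theorem pderiv_shifted_hankel_det_eq_antiDiagSum_adjugate {K : Type*} [Field K] {n : ℕ}
    (hn : 1 ≤ n) (h : ℕ → K) (k : ℕ) (hk1 : 1 ≤ k) (hk2 : k ≤ 2 * n - 1)
    (HA : Matrix (Fin n) (Fin n) K)
    (hHA : ∀ i j, HA i j = h ((i : ℕ) + (j : ℕ) + 1)) :
    MvPolynomial.eval h
      (MvPolynomial.pderiv k
        (Matrix.det (Matrix.of fun i j : Fin n =>
          (MvPolynomial.X ((i : ℕ) + (j : ℕ) + 1) : MvPolynomial ℕ K))))
    = antiDiagSum HA.adjugate (k - 1) := by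
  have hM : HA = (MvPolynomial.eval h).mapMatrix (Matrix.of fun i j : Fin n =>
      (MvPolynomial.X ((i : ℕ) + (j : ℕ) + 1) : MvPolynomial ℕ K)) := by
    ext i j
    simp [hHA]
  rw [derivation_det_aux, hM, ← RingHom.map_adjugate, antiDiagSum, map_sum]
  refine Finset.sum_congr rfl fun i _ => ?_
  rw [map_sum]
  refine Finset.sum_congr rfl fun j _ => ?_
  rw [map_mul, Matrix.of_apply, MvPolynomial.pderiv_X]
  by_cases hij : (i : ℕ) + (j : ℕ) = k - 1
  · have : (j : ℕ) + (i : ℕ) + 1 = k := by omega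
    rw [this, if_pos hij]
    simp
  · have : (j : ℕ) + (i : ℕ) + 1 ≠ k := by omega
    rw [if_neg hij]
    simp [Pi.single_apply, this, this.symm]
end

section
/- Let l_0,…,l_{n−1} and r_0,…,r_{n−1} be elements of K, let L be the n×n lower-left triangular Hankel matrix with L_{ij} = l_{i+j−2} when i+j−2 ≤ n−1 and L_{ij} = 0 otherwise, and let R be the n×n upper triangular Toeplitz matrix with R_{ij} = r_{j−i} when j ≥ i and R_{ij} = 0 otherwise. Then for every 0 ≤ k ≤ n−1, the k-th anti-diagonal sum of the product satisfies σ_k(LR) = Σ_{s=0}^{k} (s+1)·l_s·r_{k−s}; equivalently, Σ_{k=0}^{n−1} σ_k(LR)·x^k is the truncation modulo x^n of the product (Σ_{s=0}^{n−1} l_s x^{s+1})′ · (Σ_{s=0}^{n−1} r_s x^s), where ′ denotes formal differentiation. -/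
open Matrix Polynomial

theorem sum_pairs_aux {K : Type*} [Field K] (n s : ℕ) (hs : s < n) (c : K) :
    ∑ i ∈ Finset.range n, ∑ m ∈ Finset.range n, (if i + m = s then c else 0)
      = ((s + 1 : ℕ) : K) * c := by
  have h1 : ∀ i ∈ Finset.range n, ∑ m ∈ Finset.range n, (if i + m = s then c else 0)
      = if i ∈ Finset.range (s + 1) then c else 0 := by
    intro i _
    by_cases h : i ≤ s
    · rw [Finset.sum_eq_single (s - i)]
      · rw [if_pos (by omega), if_pos (Finset.mem_range.2 (by omega))]
      · intro b _ hb
        exact if_neg (by omega)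
      · intro hb
        exact absurd (Finset.mem_range.2 (by omega)) hb
    · rw [if_neg (by simp only [Finset.mem_range]; omega)]
      exact Finset.sum_eq_zero fun m _ => if_neg (by omega)
  rw [Finset.sum_congr rfl h1, Finset.sum_ite_mem, Finset.inter_eq_right.2]
  · simp
  · intro x hx
    simp only [Finset.mem_range] at *
    omega

theorem sum_le_aux {K : Type*} [Field K] (n k : ℕ) (hk : k < n) (g : ℕ → K) :
    ∑ i ∈ Finset.range n, ∑ m ∈ Finset.range n, (if i + m ≤ k then g (i + m) else 0)
      = ∑ s ∈ Finset.range (k + 1), ((s + 1 : ℕ) : K) * g s := by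
  have h1 : ∀ i m : ℕ, (if i + m ≤ k then g (i + m) else 0)
      = ∑ s ∈ Finset.range (k + 1), if i + m = s then g s else 0 := by
    intro i m
    rw [Finset.sum_ite_eq]
    simp only [Finset.mem_range, Nat.lt_succ_iff]
  simp_rw [h1]
  rw [Finset.sum_congr rfl fun i _ => Finset.sum_comm, Finset.sum_comm]
  refine Finset.sum_congr rfl fun s hs => ?_
  exact sum_pairs_aux n s (by have := Finset.mem_range.1 hs; omega) (g s)

/-- Let `L` be the lower-left triangular Hankel matrix with entries
`L_{ij} = l_{i+j-2}` for `i+j-2 ≤ n-1` and `0` otherwise, and `R` the upper triangular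
Toeplitz matrix with entries `R_{ij} = r_{j-i}` for `j ≥ i` and `0` otherwise.  Then for
every `0 ≤ k ≤ n-1`, `σ_k(LR) = Σ_{s=0}^{k} (s+1)·l_s·r_{k-s}`; equivalently,
`Σ_{k=0}^{n-1} σ_k(LR) x^k` is the truncation modulo `x^n` of
`(Σ_{s=0}^{n-1} l_s x^{s+1})' · (Σ_{s=0}^{n-1} r_s x^s)`. -/
theorem antiDiagSum_tril_hankel_mul_triu_toeplitz_low {K : Type*} [Field K] {n : ℕ}
    (hn : 1 ≤ n) (l r : ℕ → K)
    (L R : Matrix (Fin n) (Fin n) K)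
    (hL : ∀ i j, L i j =
      if (i : ℕ) + (j : ℕ) ≤ n - 1 then l ((i : ℕ) + (j : ℕ)) else 0)
    (hR : ∀ i j, R i j = if (i : ℕ) ≤ (j : ℕ) then r ((j : ℕ) - (i : ℕ)) else 0) :
    (∀ k : ℕ, k ≤ n - 1 →
        antiDiagSum (L * R) k
          = ∑ s ∈ Finset.range (k + 1), ((s + 1 : ℕ) : K) * l s * r (k - s)) ∧
      (∀ k : ℕ, k < n →
        (Polynomial.derivative
              (∑ s ∈ Finset.range n, Polynomial.C (l s) * Polynomial.X ^ (s + 1))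
            * ∑ s ∈ Finset.range n, Polynomial.C (r s) * Polynomial.X ^ s).coeff k
          = antiDiagSum (L * R) k) := by
  have key : ∀ k : ℕ, k ≤ n - 1 →
        antiDiagSum (L * R) k
          = ∑ s ∈ Finset.range (k + 1), ((s + 1 : ℕ) : K) * l s * r (k - s) := by
    intro k hk
    have h2 := sum_le_aux n k (by omega) (fun s => l s * r (k - s))
    simp only [← mul_assoc] at h2
    rw [← h2, ← Fin.sum_univ_eq_sum_range (fun i => ∑ m ∈ Finset.range n,
      (if i + m ≤ k then l (i + m) * r (k - (i + m)) else 0))]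
    unfold antiDiagSum
    refine Finset.sum_congr rfl fun i _ => ?_
    rw [← Fin.sum_univ_eq_sum_range (fun m =>
      (if (i : ℕ) + m ≤ k then l (i + m) * r (k - (i + m)) else 0))]
    by_cases hik : (i : ℕ) ≤ k
    · rw [Finset.sum_eq_single (⟨k - i, by omega⟩ : Fin n)]
      · rw [if_pos (by simp only []; omega), Matrix.mul_apply]
        refine Finset.sum_congr rfl fun m _ => ?_
        rw [hL, hR]
        simp only []
        by_cases hm : (i : ℕ) + m ≤ k
        · rw [if_pos (by omega), if_pos (by omega), if_pos hm, Nat.sub_sub]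
        · rw [if_neg hm, if_neg (show ¬ ((m : ℕ) ≤ k - i) by omega), mul_zero]
      · intro b _ hb
        refine if_neg fun h => hb ?_
        ext
        simp only []
        omega
      · intro h
        exact absurd (Finset.mem_univ _) h
    · rw [Finset.sum_eq_zero fun j _ => if_neg (by omega),
        Finset.sum_eq_zero fun j _ => if_neg (by omega)]
  refine ⟨key, fun k hk => ?_⟩
  rw [key k (by omega), Polynomial.coeff_mul,
    Finset.Nat.sum_antidiagonal_eq_sum_range_succ_mk]
  refine Finset.sum_congr rfl fun s hs => ?_
  have hs' := Finset.mem_range.1 hs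
  have e1 : s < n := by omega
  have e2 : k - s < n := by omega
  simp only [Polynomial.coeff_derivative, Polynomial.finset_sum_coeff,
    Polynomial.coeff_C_mul_X_pow, add_left_inj, Finset.sum_ite_eq, Finset.mem_range, e1, e2,
    if_true]
  push_cast
  ring
end

section
/- Let R be a commutative ring, let n and r be integers with 2 ≤ r ≤ n+2, and let a, b, c ∈ R[z] with deg a + deg c ≤ r−1 and deg b ≤ n. Write b = b_H(z)·z^{n−r+2} + b_low(z) where b_low consists of the terms of b of degree < n−r+2, and set b_L = b_low(1) ∈ R (the sum of the coefficients of b of degree at most n−r+1). Then the evaluation at z = 1 of the truncation of a·b·c modulo z^{n+1} equals the evaluation at z = 1 of the truncation of a·b_H·c modulo z^{r−1}, plus b_L times a(1)·c(1); that is, (a(z)b(z)c(z) mod z^{n+1})(1) = (a(z)b_H(z)c(z) mod z^{r−1})(1) + (a(z)·b_L·c(z))(1). -/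
open Polynomial

/-- Let `R` be a commutative ring, `2 ≤ r ≤ n + 2`, and
`a, b, c ∈ R[z]` with `deg a + deg c ≤ r - 1` and `deg b ≤ n`. Write
`b = b_H(z)·z^{n-r+2} + b_low(z)` with `deg b_low < n - r + 2`, and set
`b_L = b_low(1)`.  Then
`(a(z)·b(z)·c(z) mod z^{n+1})(1) = (a(z)·b_H(z)·c(z) mod z^{r-1})(1) + b_L·a(1)·c(1)`,
where `p mod z^m` discards all terms of degree `≥ m`. -/
theorem lazy_evaluation_split {R : Type*} [CommRing R] (n r : ℕ)
    (hr2 : 2 ≤ r) (hrn : r ≤ n + 2)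
    (a b c : Polynomial R)
    (hac : a.natDegree + c.natDegree ≤ r - 1)
    (hb : b.natDegree ≤ n)
    (bH bLow : Polynomial R)
    (hsplit : b = bH * Polynomial.X ^ (n + 2 - r) + bLow)
    (hbLow : bLow.degree < ((n + 2 - r : ℕ) : WithBot ℕ)) :
    ((a * b * c) %ₘ (Polynomial.X ^ (n + 1))).eval 1
      = ((a * bH * c) %ₘ (Polynomial.X ^ (r - 1))).eval 1
        + bLow.eval 1 * (a.eval 1 * c.eval 1) := by
  nontriviality R
  obtain ⟨m, rfl⟩ : ∃ m, r = m + 1 := ⟨r - 1, by omega⟩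
  obtain ⟨k, hk⟩ : ∃ k, n + 1 = m + k := ⟨n + 1 - m, by omega⟩
  have hk2 : n + 2 - (m + 1) = k := by omega
  rw [hk2] at hsplit hbLow
  simp only [Nat.add_sub_cancel] at hac ⊢
  rw [hk]
  have hP := modByMonic_add_div (a * bH * c) (X ^ m : R[X])
  have hdeg : ((a * bH * c) %ₘ (X ^ m : R[X])).degree < (m : WithBot ℕ) := by
    simpa using degree_modByMonic_lt (a * bH * c) (monic_X_pow (R := R) m)
  have hQ : (a * bLow * c).degree < ((m + k : ℕ) : WithBot ℕ) := by
    by_cases h0 : bLow = 0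
    · subst h0
      rw [mul_zero, zero_mul, degree_zero]
      exact WithBot.bot_lt_coe _
    · have h1 : bLow.natDegree < k := (natDegree_lt_iff_degree_lt h0).2 hbLow
      have h2 := natDegree_mul_le (p := a * bLow) (q := c)
      have h3 := natDegree_mul_le (p := a) (q := bLow)
      refine lt_of_le_of_lt degree_le_natDegree ?_
      exact_mod_cast (by omega : (a * bLow * c).natDegree < m + k)
  have hR : (((a * bH * c) %ₘ (X ^ m : R[X])) * X ^ k).degree
      < ((m + k : ℕ) : WithBot ℕ) := by
    rw [degree_lt_iff_coeff_zero] at hdeg ⊢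
    intro j hj
    rw [coeff_mul_X_pow', if_pos (by omega)]
    exact hdeg _ (by omega)
  have key := (div_modByMonic_unique (f := a * b * c)
    ((a * bH * c) /ₘ (X ^ m : R[X]))
    (((a * bH * c) %ₘ (X ^ m : R[X])) * X ^ k + a * bLow * c)
    (monic_X_pow (R := R) (m + k)) ⟨by
      rw [hsplit, pow_add]
      linear_combination (X ^ k) * hP, by
      rw [degree_X_pow]
      exact lt_of_le_of_lt (degree_add_le _ _) (max_lt hR hQ)⟩).2
  rw [key]
  simp only [eval_add, eval_mul, eval_pow, eval_X, one_pow, mul_one]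
  ring
end
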